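/- Let n ≥ 2, let Ω, Ω̃ ⊆ ℝⁿ be bounded, uniformly convex open domains with smooth boundary with defining functions h̃ and h respectively, and suppose the closure of Ω̃ is contained in the open unit ball B₁(0). Then there exists a constant C₂₈ > 0, depending only on Ω and Ω̃, such that for every strictly convex solution (u, c) of the second boundary value problem for the Lorentz mean curvature operator on (Ω, Ω̃), with Legendre transform ũ, one has for every y ∈ ∂Ω̃: ⟨β̃(y), D²ũ(y) β̃(y)⟩ ≤ C₂₈, where β̃(y) = ∇h̃(∇ũ(y)). -/

import Mathlib

noncomputable section
open MeasureTheory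
open scoped RealInnerProductSpace

/-- The `i`-th standard basis vector of `ℝⁿ`. -/
def ev (n : ℕ) (i : Fin n) : EuclideanSpace ℝ (Fin n) := EuclideanSpace.single i 1

/-- Lorentz mean curvature operator `M[u] x = ∑ i, ∂ᵢ (∂ᵢ u / √(1 - |∇u|²)) x`. -/
def MOp (n : ℕ) (u : EuclideanSpace ℝ (Fin n) → ℝ) (x : EuclideanSpace ℝ (Fin n)) : ℝ :=
  ∑ i : Fin n,
    fderiv ℝ (fun y => fderiv ℝ u y (ev n i) / Real.sqrt (1 - ‖gradient u y‖ ^ 2)) x (ev n i)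

/-- Euclidean mean curvature operator `E[u] x = ∑ i, ∂ᵢ (∂ᵢ u / √(1 + |∇u|²)) x`. -/
def EOp (n : ℕ) (u : EuclideanSpace ℝ (Fin n) → ℝ) (x : EuclideanSpace ℝ (Fin n)) : ℝ :=
  ∑ i : Fin n,
    fderiv ℝ (fun y => fderiv ℝ u y (ev n i) / Real.sqrt (1 + ‖gradient u y‖ ^ 2)) x (ev n i)

/-- `Ω` is a uniformly convex domain with smooth boundary, exhibited by the defining
function `h` with uniform concavity constant `θ`:  `h` is smooth, `Ω = {h > 0}`,
`|∇h| = 1` on `∂Ω`, and `⟨ξ, D²h(p) ξ⟩ ≤ -θ |ξ|²` for all `p, ξ`. -/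
def IsUnifConvexDefFn (n : ℕ) (Ω : Set (EuclideanSpace ℝ (Fin n)))
    (h : EuclideanSpace ℝ (Fin n) → ℝ) (θ : ℝ) : Prop :=
  ContDiff ℝ (⊤ : ℕ∞) h ∧ Ω = {p | 0 < h p} ∧
  (∀ p ∈ frontier Ω, ‖gradient h p‖ = 1) ∧ 0 < θ ∧
  ∀ p ξ : EuclideanSpace ℝ (Fin n), ⟪ξ, fderiv ℝ (gradient h) p ξ⟫ ≤ -θ * ‖ξ‖ ^ 2

/-- `u` is smooth on the closure of `Ω` (i.e. on an open neighbourhood of it). -/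
def SmoothOnClosure (n : ℕ) (Ω : Set (EuclideanSpace ℝ (Fin n)))
    (u : EuclideanSpace ℝ (Fin n) → ℝ) : Prop :=
  ∃ U : Set (EuclideanSpace ℝ (Fin n)), IsOpen U ∧ closure Ω ⊆ U ∧ ContDiffOn ℝ (⊤ : ℕ∞) u U

/-- `(u, c)` is a strictly convex solution of the second boundary value problem for the
Lorentz mean curvature operator on `(Ω, Ω')`: `u` is smooth up to the boundary, spacelike
(`|∇u| < 1`), has positive definite Hessian `D²u` on the closure of `Ω`, its gradient map
is a bijection from `Ω` onto `Ω'`, and `M[u] = c` on `Ω`. -/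
def IsSol (n : ℕ) (Ω Ω' : Set (EuclideanSpace ℝ (Fin n)))
    (u : EuclideanSpace ℝ (Fin n) → ℝ) (c : ℝ) : Prop :=
  SmoothOnClosure n Ω u ∧
  (∀ x ∈ closure Ω, ‖gradient u x‖ < 1) ∧
  (∀ x ∈ closure Ω, ∀ ξ : EuclideanSpace ℝ (Fin n), ξ ≠ 0 →
      0 < ⟪ξ, fderiv ℝ (gradient u) x ξ⟫) ∧
  Set.BijOn (gradient u) Ω Ω' ∧
  (∀ x ∈ Ω, MOp n u x = c)

/-- `(u, c)` is a strictly convex solution of the second boundary value problem for the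
Euclidean mean curvature operator on `(Ω, Ω')`. -/
def IsSolE (n : ℕ) (Ω Ω' : Set (EuclideanSpace ℝ (Fin n)))
    (u : EuclideanSpace ℝ (Fin n) → ℝ) (c : ℝ) : Prop :=
  SmoothOnClosure n Ω u ∧
  (∀ x ∈ closure Ω, ∀ ξ : EuclideanSpace ℝ (Fin n), ξ ≠ 0 →
      0 < ⟪ξ, fderiv ℝ (gradient u) x ξ⟫) ∧
  Set.BijOn (gradient u) Ω Ω' ∧
  (∀ x ∈ Ω, EOp n u x = c)

/-- `ut` is the Legendre transform of `u`: it is smooth up to the boundary of `Ω'`,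
satisfies `ut (∇u x) = ⟨x, ∇u x⟩ - u x` and `∇ut (∇u x) = x` for `x ∈ Ω`. -/
def IsLegendre (n : ℕ) (Ω Ω' : Set (EuclideanSpace ℝ (Fin n)))
    (u ut : EuclideanSpace ℝ (Fin n) → ℝ) : Prop :=
  SmoothOnClosure n Ω' ut ∧
  (∀ x ∈ Ω, ut (gradient u x) = ⟪x, gradient u x⟫ - u x) ∧
  (∀ x ∈ Ω, gradient ut (gradient u x) = x)

/-- The coefficient matrix `s_ij(p) = (δ_ij + pᵢpⱼ/(1 - |p|²)) / √(1 - |p|²)` of the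
Lorentz mean curvature operator written in nondivergence form. -/
def sMat (n : ℕ) (p : EuclideanSpace ℝ (Fin n)) (i j : Fin n) : ℝ :=
  ((if i = j then (1 : ℝ) else 0) + p i * p j / (1 - ‖p‖ ^ 2)) / Real.sqrt (1 - ‖p‖ ^ 2)

/-- `Ω` has smooth boundary: it is the superlevel set of a smooth function whose
gradient does not vanish on the boundary. -/
def HasSmoothBoundary (n : ℕ) (Ω : Set (EuclideanSpace ℝ (Fin n))) : Prop :=
  ∃ g : EuclideanSpace ℝ (Fin n) → ℝ, ContDiff ℝ (⊤ : ℕ∞) g ∧ Ω = {p | 0 < g p} ∧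
    ∀ p ∈ frontier Ω, gradient g p ≠ 0

/-- `B(p) = Iₙ + p pᵀ / (v (1 + v))`, `v = √(1 - |p|²)`: the positive square root of the
inverse induced metric of a spacelike graph with gradient `p`. -/
def sqB (n : ℕ) (p : EuclideanSpace ℝ (Fin n)) : Matrix (Fin n) (Fin n) ℝ :=
  1 + (Real.sqrt (1 - ‖p‖ ^ 2) * (1 + Real.sqrt (1 - ‖p‖ ^ 2)))⁻¹ •
      Matrix.of fun i j => p i * p j

/-- `B'(p) = Iₙ - p pᵀ / (1 + v)`, `v = √(1 - |p|²)`: the square root of the induced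
metric of a spacelike graph with gradient `p`. -/
def sqBinv (n : ℕ) (p : EuclideanSpace ℝ (Fin n)) : Matrix (Fin n) (Fin n) ℝ :=
  1 - (1 + Real.sqrt (1 - ‖p‖ ^ 2))⁻¹ • Matrix.of fun i j => p i * p j

/-!
The barrier `K h(∇u) - g` is nonnegative on `Ω` for a constant `K` independent of the solution. It
is nonnegative on `∂Ω` for every `K ≥ 0`, so only an interior minimum has to be excluded. There the
differentiated equation controls the third derivatives of `u`, while the uniform concavity of `h`
contributes a quadratic term, and together they give `K θ τ² ≤ A τ + B` for the Laplacian
`τ = tr D²u`. This fails for large `K` as soon as `τ` is bounded below. The equation makes `τ`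
comparable to `c`, and `c` is bounded below because `∇u` maps `Ω` onto `Ω'`, so that
`|Ω'| ≤ ∫ det D²u ≤ cⁿ |Ω|`.

In terms of the Legendre transform, `0 ≤ g(∇ũ) ≤ K h` on `Ω'`. Both inequalities are equalities on
`∂Ω'`, so the derivative of `g(∇ũ)` in a direction `v` is at most `K |∇h| |v| = K |v|` there. For
`v = ∇g(∇ũ)` this derivative is the quantity to be estimated.
-/

open InnerProductSpace Module Set Topology
open LinearMap (trace trace_eq_sum_inner trace_one)

section PositiveOperators

variable {E : Type*} [NormedAddCommGroup E] [InnerProductSpace ℝ E] [FiniteDimensional ℝ E]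
  {T : E →ₗ[ℝ] E}

lemma eigenvalues_le_trace (hT : T.IsPositive) {m : ℕ} (hm : finrank ℝ E = m) (i : Fin m) :
    hT.isSymmetric.eigenvalues hm i ≤ trace ℝ E T := by
  rw [hT.isSymmetric.trace_eq_sum_eigenvalues hm]
  exact Finset.single_le_sum (fun j _ ↦ hT.nonneg_eigenvalues hm j) (Finset.mem_univ i)

lemma abs_det_le_trace_pow (hT : T.IsPositive) : |T.det| ≤ trace ℝ E T ^ finrank ℝ E := by
  have hnonneg := hT.nonneg_eigenvalues rfl
  calc |T.det| = ∏ i, hT.isSymmetric.eigenvalues rfl i := by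
        rw [hT.isSymmetric.det_eq_prod_eigenvalues rfl]
        exact abs_of_nonneg (Finset.prod_nonneg fun i _ ↦ hnonneg i)
    _ ≤ ∏ _i : Fin (finrank ℝ E), trace ℝ E T :=
        Finset.prod_le_prod (fun i _ ↦ hnonneg i) fun i _ ↦ eigenvalues_le_trace hT rfl i
    _ = trace ℝ E T ^ finrank ℝ E := by simp

lemma norm_apply_le_trace_mul_norm (hT : T.IsPositive) (v : E) :
    ‖T v‖ ≤ trace ℝ E T * ‖v‖ := by
  set b := hT.isSymmetric.eigenvectorBasis rfl
  refine le_of_sq_le_sq ?_ (mul_nonneg hT.trace_nonneg (norm_nonneg v))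
  have hcoord (i) : ‖⟪b i, T v⟫‖ ≤ trace ℝ E T * ‖⟪b i, v⟫‖ := by
    rw [← hT.isSymmetric, hT.isSymmetric.apply_eigenvectorBasis, inner_smul_left, norm_mul]
    gcongr
    simpa [abs_of_nonneg (hT.nonneg_eigenvalues rfl i)] using eigenvalues_le_trace hT rfl i
  calc ‖T v‖ ^ 2 = ∑ i, ‖⟪b i, T v⟫‖ ^ 2 := (b.sum_sq_norm_inner_right _).symm
    _ ≤ ∑ i, (trace ℝ E T * ‖⟪b i, v⟫‖) ^ 2 := by gcongr with i; exact hcoord i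
    _ = (trace ℝ E T * ‖v‖) ^ 2 := by
        simp_rw [mul_pow, ← Finset.mul_sum, b.sum_sq_norm_inner_right]

lemma sq_trace_le_finrank_mul_trace_mul_self (hT : T.IsSymmetric) :
    trace ℝ E T ^ 2 ≤ finrank ℝ E * trace ℝ E (T * T) := by
  have b := stdOrthonormalBasis ℝ E
  have hdiag (i) : ⟪b i, T (b i)⟫ ^ 2 ≤ ⟪b i, (T * T) (b i)⟫ := by
    rw [Module.End.mul_apply, ← hT (b i) (T (b i)), real_inner_self_eq_norm_sq]
    refine sq_le_sq.2 ((abs_real_inner_le_norm _ _).trans ?_)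
    simp
  calc trace ℝ E T ^ 2 = (∑ i, ⟪b i, T (b i)⟫) ^ 2 := by rw [trace_eq_sum_inner T b]
    _ ≤ finrank ℝ E * ∑ i, ⟪b i, T (b i)⟫ ^ 2 := by
        simpa using sq_sum_le_card_mul_sum_sq (s := Finset.univ) (f := fun i ↦ ⟪b i, T (b i)⟫)
    _ ≤ finrank ℝ E * trace ℝ E (T * T) := by
        rw [trace_eq_sum_inner (T * T) b]
        gcongr with i
        exact hdiag i

end PositiveOperators

section LorentzSymbol

variable {E : Type*} [NormedAddCommGroup E] [InnerProductSpace ℝ E]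

/-- The principal symbol `(1 - |p|²)^{3/2} s_ij(p) A_ij` of the Lorentz mean curvature operator. The
normalization by `(1 - |p|²)^{3/2}` makes it polynomial in `p`. -/
def lorentzSymbol (p : E) (A : E →L[ℝ] E) : ℝ :=
  (1 - ‖p‖ ^ 2) * trace ℝ E A + ⟪p, A p⟫

variable {p : E} {A B : E →L[ℝ] E}

lemma lorentzSymbol_add (p : E) (A B : E →L[ℝ] E) :
    lorentzSymbol p (A + B) = lorentzSymbol p A + lorentzSymbol p B := by
  simp only [lorentzSymbol, ContinuousLinearMap.toLinearMap_add, map_add, add_apply,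
    inner_add_right]
  ring

lemma lorentzSymbol_smul (p : E) (a : ℝ) (A : E →L[ℝ] E) :
    lorentzSymbol p (a • A) = a * lorentzSymbol p A := by
  simp only [lorentzSymbol, ContinuousLinearMap.toLinearMap_smul, map_smul, smul_apply,
    smul_eq_mul, inner_smul_right]
  ring

lemma mul_trace_le_lorentzSymbol (hA : A.IsPositive) :
    (1 - ‖p‖ ^ 2) * trace ℝ E A ≤ lorentzSymbol p A :=
  le_add_of_nonneg_right (hA.inner_nonneg_right p)

variable [FiniteDimensional ℝ E]

lemma lorentzSymbol_mono (hp : ‖p‖ ≤ 1) (hAB : ∀ v, ⟪v, A v⟫ ≤ ⟪v, B v⟫) :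
    lorentzSymbol p A ≤ lorentzSymbol p B := by
  have b := stdOrthonormalBasis ℝ E
  have hr : 0 ≤ 1 - ‖p‖ ^ 2 := sub_nonneg.2 (pow_le_one₀ (norm_nonneg p) hp)
  simp only [lorentzSymbol, trace_eq_sum_inner _ b]
  gcongr
  exacts [hAB _, hAB p]

lemma lorentzSymbol_one_le (hp : ‖p‖ ≤ 1) : lorentzSymbol p (1 : E →L[ℝ] E) ≤ finrank ℝ E + 1 := by
  have hp2 : ‖p‖ ^ 2 ≤ 1 := pow_le_one₀ (norm_nonneg p) hp
  have htrace : trace ℝ E (1 : E →L[ℝ] E) = finrank ℝ E := trace_one ℝ E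
  rw [lorentzSymbol, htrace, one_apply_eq_self, real_inner_self_eq_norm_sq]
  nlinarith [mul_nonneg (sq_nonneg ‖p‖) (Nat.cast_nonneg (α := ℝ) (finrank ℝ E))]

lemma lorentzSymbol_le_trace (hA : A.IsPositive) : lorentzSymbol p A ≤ trace ℝ E A := by
  have hinner : ⟪p, A p⟫ ≤ ‖p‖ * (trace ℝ E A * ‖p‖) :=
    (real_inner_le_norm _ _).trans <|
      mul_le_mul_of_nonneg_left (norm_apply_le_trace_mul_norm hA.toLinearMap p) (norm_nonneg p)
  rw [lorentzSymbol]
  linarith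

lemma mul_sq_trace_le_lorentzSymbol_mul_self (hA : A.IsSymmetric) (hp : ‖p‖ ≤ 1) :
    (1 - ‖p‖ ^ 2) * trace ℝ E A ^ 2 ≤ finrank ℝ E * lorentzSymbol p (A * A) := by
  have hr : 0 ≤ 1 - ‖p‖ ^ 2 := sub_nonneg.2 (pow_le_one₀ (norm_nonneg p) hp)
  have hinner : 0 ≤ ⟪p, (A * A) p⟫ :=
    calc 0 ≤ ⟪A p, A p⟫ := real_inner_self_nonneg
      _ = ⟪p, (A * A) p⟫ := hA p (A p)
  calc (1 - ‖p‖ ^ 2) * trace ℝ E A ^ 2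
      ≤ (1 - ‖p‖ ^ 2) * (finrank ℝ E * trace ℝ E (A * A)) := by
        gcongr
        exact sq_trace_le_finrank_mul_trace_mul_self hA
    _ = finrank ℝ E * ((1 - ‖p‖ ^ 2) * trace ℝ E (A * A)) := by ring
    _ ≤ finrank ℝ E * lorentzSymbol p (A * A) := by
        gcongr
        exact le_add_of_nonneg_right hinner

lemma hasDerivAt_lorentzSymbol {p : ℝ → E} {p' : E} {A : ℝ → E →L[ℝ] E} {A' : E →L[ℝ] E} {t : ℝ}
    (hp : HasDerivAt p p' t) (hA : HasDerivAt A A' t) :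
    HasDerivAt (fun s ↦ lorentzSymbol (p s) (A s))
      (lorentzSymbol (p t) A' - 2 * ⟪p t, p'⟫ * trace ℝ E (A t) + ⟪p', A t (p t)⟫ + ⟪p t, A t p'⟫)
      t := by
  have htrace : HasDerivAt (fun s ↦ trace ℝ E (A s)) (trace ℝ E A') t :=
    ((trace ℝ E ∘ₗ ContinuousLinearMap.coeLM ℝ).toContinuousLinearMap.hasFDerivAt).comp_hasDerivAt
      t hA
  refine (((hp.norm_sq.const_sub 1).mul htrace).add (hp.inner ℝ (hA.clm_apply hp))).congr_deriv ?_
  simp only [lorentzSymbol, inner_add_right]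
  ring

end LorentzSymbol

section Gradient

lemma hasDerivAt_add_smul {E : Type*} [NormedAddCommGroup E] [NormedSpace ℝ E] (x v : E) (t : ℝ) :
    HasDerivAt (fun s : ℝ ↦ x + s • v) v t := by
  simpa using ((hasDerivAt_id t).smul_const v).const_add x

lemma tendsto_add_smul_zero {E : Type*} [NormedAddCommGroup E] [NormedSpace ℝ E] (x v : E) :
    Filter.Tendsto (fun s : ℝ ↦ x + s • v) (𝓝 0) (𝓝 x) := by
  simpa using (hasDerivAt_add_smul x v 0).continuousAt.tendsto

lemma deriv_deriv_nonneg_of_isLocalMin {φ : ℝ → ℝ} {a : ℝ} (hφ : ContinuousAt φ a)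
    (hmin : IsLocalMin φ a) : 0 ≤ deriv (deriv φ) a := by
  by_contra! hneg
  have hmax : IsLocalMax φ a := isLocalMax_of_deriv_deriv_neg hneg hmin.deriv_eq_zero hφ
  have hconst : φ =ᶠ[𝓝 a] fun _ ↦ φ a := by
    filter_upwards [hmin, hmax] with t h₁ h₂ using le_antisymm h₂ h₁
  have hzero : deriv (deriv φ) a = 0 := by simpa using hconst.deriv.deriv_eq
  exact hneg.ne hzero

variable {E : Type*} [NormedAddCommGroup E] [InnerProductSpace ℝ E] [CompleteSpace E]
  {f : E → ℝ} {x : E}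

lemma contDiffAt_gradient {m n : WithTop ℕ∞} (hf : ContDiffAt ℝ n f x) (hmn : m + 1 ≤ n) :
    ContDiffAt ℝ m (gradient f) x :=
  (toDual ℝ E).symm.contDiff.contDiffAt.comp x (hf.fderiv_right hmn)

lemma differentiableAt_gradient (hf : ContDiffAt ℝ 2 f x) : DifferentiableAt ℝ (gradient f) x :=
  (contDiffAt_gradient (m := 1) hf (by norm_num)).differentiableAt one_ne_zero

lemma isSymmetric_fderiv_gradient (hf : ContDiffAt ℝ 2 f x) :
    (fderiv ℝ (gradient f) x).IsSymmetric := by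
  have hsecond (v w) : ⟪fderiv ℝ (gradient f) x v, w⟫ = fderiv ℝ (fderiv ℝ f) x v w := by
    have hdiff : DifferentiableAt ℝ (fderiv ℝ f) x :=
      (hf.fderiv_right (m := 1) (by norm_num)).differentiableAt one_ne_zero
    have heq : (fun y ↦ ⟪gradient f y, w⟫) = fun y ↦ fderiv ℝ f y w :=
      funext fun _ ↦ inner_gradient_left
    have h := (differentiableAt_gradient hf).hasFDerivAt.inner ℝ (hasFDerivAt_const w x)
    rw [heq] at h
    simpa using congr($(h.unique (hdiff.hasFDerivAt.clm_apply (hasFDerivAt_const w x))) v)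
  intro v w
  simp only [ContinuousLinearMap.coe_coe]
  rw [hsecond, real_inner_comm, hsecond]
  exact (hf.isSymmSndFDerivAt (by simp)).eq v w

lemma hasGradientAt_comp_gradient {h u : E → ℝ} (hu : ContDiffAt ℝ 2 u x)
    (hh : DifferentiableAt ℝ h (gradient u x)) :
    HasGradientAt (fun y ↦ h (gradient u y))
      (fderiv ℝ (gradient u) x (gradient h (gradient u x))) x := by
  refine (hh.hasFDerivAt.comp x (differentiableAt_gradient hu).hasFDerivAt).congr_fderiv ?_
  ext v
  simpa [inner_gradient_left] using
    (isSymmetric_fderiv_gradient hu (gradient h (gradient u x)) v).symm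

lemma gradient_eq_zero_of_isLocalMin (hmin : IsLocalMin f x) : gradient f x = 0 := by
  simp [gradient, hmin.fderiv_eq_zero]

lemma inner_fderiv_gradient_nonneg_of_isLocalMin (hf : ContDiffAt ℝ 2 f x) (hmin : IsLocalMin f x)
    (v : E) : 0 ≤ ⟪v, fderiv ℝ (gradient f) x v⟫ := by
  have htendsto := tendsto_add_smul_zero x v
  have hderiv : deriv (fun t : ℝ ↦ f (x + t • v)) =ᶠ[𝓝 0] fun t ↦ ⟪gradient f (x + t • v), v⟫ := by
    filter_upwards [htendsto.eventually (hf.eventually (by simp))] with t ht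
    rw [inner_gradient_left]
    exact ((ht.differentiableAt two_ne_zero).hasFDerivAt.comp_hasDerivAt t
      (hasDerivAt_add_smul x v t)).deriv
  have hderiv2 : deriv (deriv fun t : ℝ ↦ f (x + t • v)) 0 = ⟪v, fderiv ℝ (gradient f) x v⟫ := by
    have hgrad : HasFDerivAt (gradient f) (fderiv ℝ (gradient f) x) (x + (0 : ℝ) • v) := by
      simpa using (differentiableAt_gradient hf).hasFDerivAt
    rw [hderiv.deriv_eq, real_inner_comm]
    simpa using
      ((hgrad.comp_hasDerivAt 0 (hasDerivAt_add_smul x v 0)).inner ℝ (hasDerivAt_const 0 v)).deriv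
  rw [← hderiv2]
  apply deriv_deriv_nonneg_of_isLocalMin
  · exact ContinuousAt.comp (by simpa using hf.continuousAt)
      (hasDerivAt_add_smul x v 0).continuousAt
  · filter_upwards [htendsto.eventually hmin] with t ht
    simpa using ht

end Gradient

section Equation

lemma one_sub_sq_norm_pos {E : Type*} [NormedAddCommGroup E] {p : E} (hp : ‖p‖ < 1) :
    0 < 1 - ‖p‖ ^ 2 :=
  sub_pos.2 (pow_lt_one₀ (norm_nonneg p) hp two_ne_zero)

variable {E : Type*} [NormedAddCommGroup E] [InnerProductSpace ℝ E] {x : E}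

lemma trace_le_mul_sqrt {p : E} {A : E →L[ℝ] E} {c : ℝ} (hp : ‖p‖ < 1) (hA : A.IsPositive)
    (heq : lorentzSymbol p A = c * √(1 - ‖p‖ ^ 2) ^ 3) :
    trace ℝ E A ≤ c * √(1 - ‖p‖ ^ 2) := by
  have hr := one_sub_sq_norm_pos hp
  refine le_of_mul_le_mul_left ?_ hr
  calc (1 - ‖p‖ ^ 2) * trace ℝ E A ≤ c * √(1 - ‖p‖ ^ 2) ^ 3 :=
        (mul_trace_le_lorentzSymbol hA).trans_eq heq
    _ = √(1 - ‖p‖ ^ 2) ^ 2 * (c * √(1 - ‖p‖ ^ 2)) := by ring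
    _ = (1 - ‖p‖ ^ 2) * (c * √(1 - ‖p‖ ^ 2)) := by rw [Real.sq_sqrt hr.le]

variable [FiniteDimensional ℝ E]

lemma mul_sqrt_le_trace_div {p : E} {A : E →L[ℝ] E} {c : ℝ} (hp : ‖p‖ < 1) (hA : A.IsPositive)
    (heq : lorentzSymbol p A = c * √(1 - ‖p‖ ^ 2) ^ 3) :
    c * √(1 - ‖p‖ ^ 2) ≤ trace ℝ E A / (1 - ‖p‖ ^ 2) := by
  have hr := one_sub_sq_norm_pos hp
  rw [le_div_iff₀ hr]
  calc c * √(1 - ‖p‖ ^ 2) * (1 - ‖p‖ ^ 2) = c * √(1 - ‖p‖ ^ 2) * √(1 - ‖p‖ ^ 2) ^ 2 := by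
        rw [Real.sq_sqrt hr.le]
    _ = c * √(1 - ‖p‖ ^ 2) ^ 3 := by ring
    _ ≤ trace ℝ E A := heq.symm.trans_le (lorentzSymbol_le_trace hA)

lemma sqrt_pow_three_mul_trace_fderiv {G : E → E} (hG : DifferentiableAt ℝ G x)
    (hx : ‖G x‖ < 1) :
    √(1 - ‖G x‖ ^ 2) ^ 3 * trace ℝ E (fderiv ℝ (fun y ↦ (√(1 - ‖G y‖ ^ 2))⁻¹ • G y) x :) =
      lorentzSymbol (G x) (fderiv ℝ G x) := by
  have hr := one_sub_sq_norm_pos hx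
  have hq : 0 < √(1 - ‖G x‖ ^ 2) := Real.sqrt_pos.2 hr
  have hq2 : √(1 - ‖G x‖ ^ 2) ^ 2 = 1 - ‖G x‖ ^ 2 := Real.sq_sqrt hr.le
  have hinv := (hasDerivAt_inv hq.ne').comp_hasFDerivAt x
    ((hG.hasFDerivAt.norm_sq.const_sub 1).sqrt hr.ne')
  have hsmul := (hinv.smul hG.hasFDerivAt).fderiv
  simp only [Function.comp_def, Pi.smul_def'] at hsmul
  rw [lorentzSymbol, hsmul]
  simp [LinearMap.trace_smulRight, field, hq2]

lemma MOp_eq_trace_fderiv {n : ℕ} {u : EuclideanSpace ℝ (Fin n) → ℝ} {x : EuclideanSpace ℝ (Fin n)}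
    (hu : DifferentiableAt ℝ (gradient u) x) (hx : ‖gradient u x‖ < 1) :
    MOp n u x =
      trace ℝ _
        (fderiv ℝ (fun y ↦ (√(1 - ‖gradient u y‖ ^ 2))⁻¹ • gradient u y) x).toLinearMap := by
  have hfield : DifferentiableAt ℝ (fun y ↦ (√(1 - ‖gradient u y‖ ^ 2))⁻¹ • gradient u y) x := by
    have hr := one_sub_sq_norm_pos hx
    exact (((hu.norm_sq ℝ).const_sub 1).sqrt hr.ne').inv (Real.sqrt_pos.2 hr).ne' |>.smul hu
  rw [trace_eq_sum_inner _ (EuclideanSpace.basisFun (Fin n) ℝ), MOp]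
  refine Finset.sum_congr rfl fun i _ ↦ ?_
  have hcoord : (fun y ↦ fderiv ℝ u y (ev n i) / √(1 - ‖gradient u y‖ ^ 2)) =
      fun y ↦ ⟪(√(1 - ‖gradient u y‖ ^ 2))⁻¹ • gradient u y, ev n i⟫ := by
    ext y
    rw [real_inner_smul_left, inner_gradient_left, div_eq_inv_mul]
  rw [hcoord, (hfield.hasFDerivAt.inner ℝ (hasFDerivAt_const (ev n i) x)).fderiv]
  simp [ev, real_inner_comm]

lemma lorentzSymbol_fderiv_fderiv_gradient {u : E → ℝ} {c : ℝ} (hu : ContDiffAt ℝ 3 u x)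
    (hx : ‖gradient u x‖ < 1)
    (heq : ∀ᶠ y in 𝓝 x, lorentzSymbol (gradient u y) (fderiv ℝ (gradient u) y) =
      c * √(1 - ‖gradient u y‖ ^ 2) ^ 3) (v : E) :
    lorentzSymbol (gradient u x) (fderiv ℝ (fderiv ℝ (gradient u)) x v) =
      (2 * trace ℝ E (fderiv ℝ (gradient u) x) - 3 * c * √(1 - ‖gradient u x‖ ^ 2)) *
          ⟪gradient u x, fderiv ℝ (gradient u) x v⟫ -
        2 * ⟪fderiv ℝ (gradient u) x v, fderiv ℝ (gradient u) x (gradient u x)⟫ := by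
  have hu2 : ContDiffAt ℝ 2 u x := hu.of_le (by norm_num)
  have hr := one_sub_sq_norm_pos hx
  have hgrad := (differentiableAt_gradient hu2).hasFDerivAt.hasLineDerivAt v
  have hdiff : DifferentiableAt ℝ (fderiv ℝ (gradient u)) x :=
    ((contDiffAt_gradient (m := 2) hu (by norm_num)).fderiv_right (m := 1)
      (by norm_num)).differentiableAt one_ne_zero
  have hlhs := hasDerivAt_lorentzSymbol hgrad (hdiff.hasFDerivAt.hasLineDerivAt v)
  have hrhs := (((hgrad.norm_sq.const_sub 1).sqrt (by simpa using hr.ne')).pow 3).const_mul c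
  have huniq := hlhs.unique
    (hrhs.congr_of_eventuallyEq ((tendsto_add_smul_zero x v).eventually heq))
  have hsymm : ⟪fderiv ℝ (gradient u) x v, fderiv ℝ (gradient u) x (gradient u x)⟫ =
      ⟪gradient u x, fderiv ℝ (gradient u) x (fderiv ℝ (gradient u) x v)⟫ := by
    rw [real_inner_comm]
    exact isSymmetric_fderiv_gradient hu2 _ _
  simp only [zero_smul, add_zero, ← hsymm, Nat.cast_ofNat] at huniq
  linear_combination (norm := (field_simp; ring)) huniq

end Equation

section Barrier

variable {E : Type*} [NormedAddCommGroup E] [InnerProductSpace ℝ E] [CompleteSpace E]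
  {u g h : E → ℝ} {K θ : ℝ} {x : E}

lemma hasGradientAt_barrier (hu : ContDiffAt ℝ 2 u x) (hh : DifferentiableAt ℝ h (gradient u x))
    (hg : DifferentiableAt ℝ g x) :
    HasGradientAt (fun y ↦ K * h (gradient u y) - g y)
      (K • fderiv ℝ (gradient u) x (gradient h (gradient u x)) - gradient g x) x := by
  have hcomp := (hasGradientAt_comp_gradient hu hh).hasFDerivAt
  refine ((hcomp.const_mul K).sub hg.hasFDerivAt).congr_fderiv ?_
  simp

lemma hasFDerivAt_gradient_barrier (hu : ContDiffAt ℝ 3 u x) (hh : ContDiffAt ℝ 2 h (gradient u x))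
    (hg : ContDiffAt ℝ 2 g x) :
    HasFDerivAt (gradient fun y ↦ K * h (gradient u y) - g y)
      (K • (fderiv ℝ (fderiv ℝ (gradient u)) x (gradient h (gradient u x)) +
        fderiv ℝ (gradient u) x * fderiv ℝ (gradient h) (gradient u x) * fderiv ℝ (gradient u) x) -
          fderiv ℝ (gradient g) x) x := by
  have hu' : ContDiffAt ℝ 2 (gradient u) x := contDiffAt_gradient hu (by norm_num)
  have hdiff : DifferentiableAt ℝ (fderiv ℝ (gradient u)) x :=
    (hu'.fderiv_right (m := 1) (by norm_num)).differentiableAt one_ne_zero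
  have hgrad : gradient (fun y ↦ K * h (gradient u y) - g y) =ᶠ[𝓝 x] fun y ↦
      K • fderiv ℝ (gradient u) y (gradient h (gradient u y)) - gradient g y := by
    filter_upwards [hu.eventually (by simp), hu'.continuousAt.eventually (hh.eventually (by simp)),
      hg.eventually (by simp)] with y huy hhy hgy
    exact (hasGradientAt_barrier (huy.of_le (by norm_num)) (hhy.differentiableAt two_ne_zero)
      (hgy.differentiableAt two_ne_zero)).gradient
  have hnormal := (differentiableAt_gradient hh).hasFDerivAt.comp x
    (hu'.differentiableAt two_ne_zero).hasFDerivAt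
  refine (((hdiff.hasFDerivAt.clm_apply hnormal).const_smul K).sub
    (differentiableAt_gradient hg).hasFDerivAt).congr_fderiv ?_ |>.congr_of_eventuallyEq hgrad
  ext1 v
  have hsymm := (hu'.isSymmSndFDerivAt (by simp)).eq v (gradient h (gradient u x))
  simp [hsymm, add_comm]

lemma mul_sq_norm_le_of_isLocalMin_barrier (hu : ContDiffAt ℝ 3 u x)
    (hh : ContDiffAt ℝ 2 h (gradient u x)) (hg : ContDiffAt ℝ 2 g x) (hK : 0 ≤ K)
    (hθ : ∀ ξ, ⟪ξ, fderiv ℝ (gradient h) (gradient u x) ξ⟫ ≤ -θ * ‖ξ‖ ^ 2)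
    (hmin : IsLocalMin (fun y ↦ K * h (gradient u y) - g y) x) (v : E) :
    K * θ * ‖fderiv ℝ (gradient u) x v‖ ^ 2 ≤
      K * ⟪v, fderiv ℝ (fderiv ℝ (gradient u)) x (gradient h (gradient u x)) v⟫ +
        ‖fderiv ℝ (gradient g) x‖ * ‖v‖ ^ 2 := by
  set p := gradient u x
  set H := fderiv ℝ (gradient u) x
  set T := fderiv ℝ (fderiv ℝ (gradient u)) x (gradient h p)
  set D := fderiv ℝ (gradient g) x
  have hbarrier : ContDiffAt ℝ 2 (fun y ↦ K * h (gradient u y) - g y) x :=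
    (contDiffAt_const.mul (hh.comp x (contDiffAt_gradient hu (by norm_num)))).sub hg
  have hnonneg : 0 ≤ ⟪v, (K • (T + H * fderiv ℝ (gradient h) p * H) - D) v⟫ := by
    rw [← (hasFDerivAt_gradient_barrier hu hh hg).fderiv]
    exact inner_fderiv_gradient_nonneg_of_isLocalMin hbarrier hmin v
  have hcurv : ⟪v, H (fderiv ℝ (gradient h) p (H v))⟫ ≤ -θ * ‖H v‖ ^ 2 := by
    have hsymm := isSymmetric_fderiv_gradient (hu.of_le (by norm_num : (2 : WithTop ℕ∞) ≤ 3))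
    exact (hsymm v _).symm.trans_le (hθ (H v))
  have hD : -⟪v, D v⟫ ≤ ‖D‖ * ‖v‖ ^ 2 := by
    refine (neg_le_abs _).trans ((abs_real_inner_le_norm v (D v)).trans ?_)
    nlinarith [D.le_opNorm v, norm_nonneg v]
  simp only [_root_.sub_apply, _root_.smul_apply, _root_.add_apply, mul_apply_eq_comp,
    inner_sub_right, inner_add_right, inner_smul_right] at hnonneg
  linarith [mul_le_mul_of_nonneg_left hcurv hK]

end Barrier

section BarrierTrace

variable {E : Type*} [NormedAddCommGroup E] [InnerProductSpace ℝ E] [FiniteDimensional ℝ E]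
  {u g h : E → ℝ} {c K θ : ℝ} {x : E}

lemma mul_lorentzSymbol_le_of_isLocalMin_barrier (hu : ContDiffAt ℝ 3 u x)
    (hh : ContDiffAt ℝ 2 h (gradient u x)) (hg : ContDiffAt ℝ 2 g x) (hx : ‖gradient u x‖ ≤ 1)
    (hK : 0 ≤ K) (hθ : ∀ ξ, ⟪ξ, fderiv ℝ (gradient h) (gradient u x) ξ⟫ ≤ -θ * ‖ξ‖ ^ 2)
    (hmin : IsLocalMin (fun y ↦ K * h (gradient u y) - g y) x) :
    K * θ * lorentzSymbol (gradient u x) (fderiv ℝ (gradient u) x * fderiv ℝ (gradient u) x) ≤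
      K * lorentzSymbol (gradient u x)
          (fderiv ℝ (fderiv ℝ (gradient u)) x (gradient h (gradient u x))) +
        (finrank ℝ E + 1) * ‖fderiv ℝ (gradient g) x‖ := by
  set p := gradient u x
  set H := fderiv ℝ (gradient u) x 
  set T := fderiv ℝ (fderiv ℝ (gradient u)) x (gradient h p)
  set D := fderiv ℝ (gradient g) x
  have hquad (v : E) : ⟪v, ((K * θ) • (H * H)) v⟫ ≤ ⟪v, (K • T + ‖D‖ • 1) v⟫ := by
    have hsq : ⟪v, H (H v)⟫ = ‖H v‖ ^ 2 := by
      rw [← real_inner_self_eq_norm_sq]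
      exact (isSymmetric_fderiv_gradient (hu.of_le (by norm_num)) v (H v)).symm
    simp only [_root_.smul_apply, _root_.add_apply, mul_apply_eq_comp, one_apply_eq_self,
      inner_add_right, inner_smul_right, hsq, real_inner_self_eq_norm_sq]
    exact mul_sq_norm_le_of_isLocalMin_barrier hu hh hg hK hθ hmin v
  calc K * θ * lorentzSymbol p (H * H) = lorentzSymbol p ((K * θ) • (H * H)) :=
        (lorentzSymbol_smul ..).symm
    _ ≤ lorentzSymbol p (K • T + ‖D‖ • 1) := lorentzSymbol_mono hx hquad
    _ = K * lorentzSymbol p T + lorentzSymbol p 1 * ‖D‖ := by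
        rw [lorentzSymbol_add, lorentzSymbol_smul, lorentzSymbol_smul, mul_comm ‖D‖]
    _ ≤ K * lorentzSymbol p T + (finrank ℝ E + 1) * ‖D‖ := by
        gcongr
        exact lorentzSymbol_one_le hx

lemma mul_lorentzSymbol_third_le_of_isLocalMin_barrier (hu : ContDiffAt ℝ 3 u x)
    (hh : DifferentiableAt ℝ h (gradient u x)) (hg : DifferentiableAt ℝ g x)
    (hx : ‖gradient u x‖ < 1) (hpos : (fderiv ℝ (gradient u) x).IsPositive)
    (heq : ∀ᶠ y in 𝓝 x, lorentzSymbol (gradient u y) (fderiv ℝ (gradient u) y) =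
      c * √(1 - ‖gradient u y‖ ^ 2) ^ 3)
    (hmin : IsLocalMin (fun y ↦ K * h (gradient u y) - g y) x) :
    K * lorentzSymbol (gradient u x)
        (fderiv ℝ (fderiv ℝ (gradient u)) x (gradient h (gradient u x))) ≤
      (2 + 3 / (1 - ‖gradient u x‖ ^ 2)) * ‖gradient g x‖ *
        trace ℝ E (fderiv ℝ (gradient u) x) := by
  -- Criticality trades `K` for `∇g`, so the bound does not involve `K`.
  have hcrit : K • fderiv ℝ (gradient u) x (gradient h (gradient u x)) = gradient g x :=
    sub_eq_zero.1 <| (hasGradientAt_barrier (hu.of_le (by norm_num)) hh hg).gradient.symm.trans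
      (gradient_eq_zero_of_isLocalMin hmin)
  have hr := one_sub_sq_norm_pos hx
  have hlower := trace_le_mul_sqrt hx hpos heq.self_of_nhds
  have hupper := mul_sqrt_le_trace_div hx hpos heq.self_of_nhds
  have hlin := lorentzSymbol_fderiv_fderiv_gradient hu hx heq (gradient h (gradient u x))
  set p := gradient u x
  set H := fderiv ℝ (gradient u) x
  set ν := gradient h p
  set τ := trace ℝ E H
  have hτ : 0 ≤ τ := hpos.toLinearMap.trace_nonneg
  have hcoef : |2 * τ - 3 * c * √(1 - ‖p‖ ^ 2)| ≤ 3 / (1 - ‖p‖ ^ 2) * τ := by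
    rw [div_mul_eq_mul_div, mul_div_assoc, abs_le]
    constructor <;> linarith [div_nonneg hτ hr.le]
  have hp : |⟪p, gradient g x⟫| ≤ ‖gradient g x‖ :=
    (abs_real_inner_le_norm _ _).trans (mul_le_of_le_one_left (norm_nonneg _) hx.le)
  have hHp : -⟪gradient g x, H p⟫ ≤ ‖gradient g x‖ * τ := by
    refine (neg_le_abs _).trans ((abs_real_inner_le_norm _ _).trans ?_)
    gcongr
    exact (norm_apply_le_trace_mul_norm hpos.toLinearMap p).trans (mul_le_of_le_one_right hτ hx.le)
  calc K * lorentzSymbol p (fderiv ℝ (fderiv ℝ (gradient u)) x ν)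
      = (2 * τ - 3 * c * √(1 - ‖p‖ ^ 2)) * ⟪p, gradient g x⟫ + 2 * -⟪gradient g x, H p⟫ := by
        rw [hlin, ← hcrit, inner_smul_right, real_inner_smul_left]
        ring
    _ ≤ 3 / (1 - ‖p‖ ^ 2) * τ * ‖gradient g x‖ + 2 * (‖gradient g x‖ * τ) := by
        refine add_le_add ((le_abs_self _).trans ?_) (by gcongr)
        rw [abs_mul]
        gcongr
    _ = (2 + 3 / (1 - ‖p‖ ^ 2)) * ‖gradient g x‖ * τ := by ring

lemma mul_sq_trace_le_of_isLocalMin_barrier (hu : ContDiffAt ℝ 3 u x)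
    (hh : ContDiffAt ℝ 2 h (gradient u x)) (hg : ContDiffAt ℝ 2 g x) (hx : ‖gradient u x‖ < 1)
    (hpos : (fderiv ℝ (gradient u) x).IsPositive)
    (heq : ∀ᶠ y in 𝓝 x, lorentzSymbol (gradient u y) (fderiv ℝ (gradient u) y) =
      c * √(1 - ‖gradient u y‖ ^ 2) ^ 3)
    (hK : 0 ≤ K) (hθ₀ : 0 ≤ θ)
    (hθ : ∀ ξ, ⟪ξ, fderiv ℝ (gradient h) (gradient u x) ξ⟫ ≤ -θ * ‖ξ‖ ^ 2)
    (hmin : IsLocalMin (fun y ↦ K * h (gradient u y) - g y) x) :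
    K * θ * (1 - ‖gradient u x‖ ^ 2) * trace ℝ E (fderiv ℝ (gradient u) x) ^ 2 ≤
      finrank ℝ E * ((2 + 3 / (1 - ‖gradient u x‖ ^ 2)) * ‖gradient g x‖ *
        trace ℝ E (fderiv ℝ (gradient u) x) + (finrank ℝ E + 1) * ‖fderiv ℝ (gradient g) x‖) := by
  set p := gradient u x
  set H := fderiv ℝ (gradient u) x
  calc K * θ * (1 - ‖p‖ ^ 2) * trace ℝ E H ^ 2 = K * θ * ((1 - ‖p‖ ^ 2) * trace ℝ E H ^ 2) := by
        ring
    _ ≤ K * θ * (finrank ℝ E * lorentzSymbol p (H * H)) := by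
        gcongr K * θ * ?_
        exact mul_sq_trace_le_lorentzSymbol_mul_self hpos.isSymmetric hx.le
    _ = finrank ℝ E * (K * θ * lorentzSymbol p (H * H)) := by ring
    _ ≤ finrank ℝ E * (K * lorentzSymbol p (fderiv ℝ (fderiv ℝ (gradient u)) x (gradient h p)) +
          (finrank ℝ E + 1) * ‖fderiv ℝ (gradient g) x‖) := by
        gcongr
        exact mul_lorentzSymbol_le_of_isLocalMin_barrier hu hh hg hx.le hK hθ hmin
    _ ≤ _ := by
        gcongr _ * (?_ + _)
        exact mul_lorentzSymbol_third_le_of_isLocalMin_barrier hu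
          (hh.differentiableAt two_ne_zero) (hg.differentiableAt two_ne_zero) hx hpos heq hmin

end BarrierTrace

section Boundary

variable {E : Type*} [NormedAddCommGroup E] [NormedSpace ℝ E] {f h : E → ℝ} {f' h' : E →L[ℝ] ℝ}
  {y ξ : E}

lemma nonneg_fderiv_of_pos_of_forall_le (hf : HasFDerivAt f f' y) (hh : HasFDerivAt h h' y)
    (hmin : ∀ z, h y < h z → f y ≤ f z) (hξ : 0 < h' ξ) : 0 ≤ f' ξ := by
  refine ge_of_tendsto (hf.hasLineDerivAt ξ).tendsto_slope_zero_right ?_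
  filter_upwards [(hh.hasLineDerivAt ξ).tendsto_slope_zero_right.eventually_const_lt hξ,
    self_mem_nhdsWithin] with t ht (htpos : 0 < t)
  have hlt : h y < h (y + t • ξ) :=
    sub_pos.1 (pos_of_mul_pos_right ht (inv_nonneg.2 htpos.le))
  exact smul_nonneg (inv_nonneg.2 htpos.le) (sub_nonneg.2 (hmin _ hlt))

lemma nonneg_fderiv_of_nonneg_of_forall_le (hf : HasFDerivAt f f' y) (hh : HasFDerivAt h h' y)
    (hmin : ∀ z, h y < h z → f y ≤ f z) (hh' : h' ≠ 0) (hξ : 0 ≤ h' ξ) : 0 ≤ f' ξ := by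
  obtain ⟨e, he⟩ : ∃ e, 0 < h' e := by
    obtain ⟨e, he⟩ := DFunLike.ne_iff.1 hh'
    rcases lt_or_gt_of_ne he with hneg | hpos
    exacts [⟨-e, by simpa using hneg⟩, ⟨e, hpos⟩]
  have htendsto : Filter.Tendsto (fun ε : ℝ ↦ f' (ξ + ε • e)) (𝓝[>] 0) (𝓝 (f' ξ)) :=
    (f'.continuous.tendsto ξ).comp ((tendsto_add_smul_zero ξ e).mono_left nhdsWithin_le_nhds)
  refine ge_of_tendsto htendsto ?_
  filter_upwards [self_mem_nhdsWithin] with ε (hε : 0 < ε)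
  refine nonneg_fderiv_of_pos_of_forall_le hf hh hmin ?_
  simpa using add_pos_of_nonneg_of_pos hξ (mul_pos hε he)

end Boundary

section BoundaryTransfer

variable {E : Type*} [NormedAddCommGroup E] [InnerProductSpace ℝ E] [CompleteSpace E]
  {g h : E → ℝ} {T : E → E} {K : ℝ} {y : E}

lemma inner_gradient_fderiv_le (hT : DifferentiableAt ℝ T y) (hh : DifferentiableAt ℝ h y)
    (hg : DifferentiableAt ℝ g (T y)) (hy : y ∈ closure {z | 0 < h z}) (hy₀ : h y = 0)
    (hgrad : gradient h y ≠ 0) (hK : 0 ≤ K) (hnonneg : ∀ z, 0 < h z → 0 ≤ g (T z))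
    (hle : ∀ z, 0 < h z → g (T z) ≤ K * h z) (v : E) :
    ⟪gradient g (T y), fderiv ℝ T y v⟫ ≤ K * ‖gradient h y‖ * ‖v‖ := by
  have hgT : HasFDerivAt (g ∘ T) (fderiv ℝ g (T y) ∘L fderiv ℝ T y) y :=
    hg.hasFDerivAt.comp y hT.hasFDerivAt
  have hgT₀ : g (T y) = 0 := by
    have hgTcont : ContinuousWithinAt (g ∘ T) {z | 0 < h z} y := hgT.continuousAt.continuousWithinAt
    refine le_antisymm ?_ (continuousWithinAt_const.closure_le hy hgTcont hnonneg)
    simpa [hy₀] using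
      hgTcont.closure_le hy (hh.continuousAt.continuousWithinAt.const_mul K) hle
  have hh' : fderiv ℝ h y ≠ 0 := by simpa [gradient] using hgrad
  rw [inner_gradient_left]
  -- Inward directions are controlled by `K h - g ∘ T ≥ 0`, outward ones by `g ∘ T ≥ 0`.
  rcases le_total 0 (fderiv ℝ h y v) with hv | hv
  · have hmin := nonneg_fderiv_of_nonneg_of_forall_le ((hh.hasFDerivAt.const_mul K).sub hgT)
      hh.hasFDerivAt (fun z hz ↦ by simpa [hy₀, hgT₀] using hle z (hy₀ ▸ hz)) hh' hv
    calc fderiv ℝ g (T y) (fderiv ℝ T y v) ≤ K * ⟪gradient h y, v⟫ := by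
          simpa [inner_gradient_left] using hmin
      _ ≤ K * (‖gradient h y‖ * ‖v‖) := by gcongr; exact real_inner_le_norm _ _
      _ = K * ‖gradient h y‖ * ‖v‖ := by ring
  · have hmin := nonneg_fderiv_of_nonneg_of_forall_le hgT hh.hasFDerivAt
      (fun z hz ↦ by simpa [hgT₀] using hnonneg z (hy₀ ▸ hz)) hh'
      (show 0 ≤ fderiv ℝ h y (-v) by simpa using hv)
    have hnonpos : fderiv ℝ g (T y) (fderiv ℝ T y v) ≤ 0 := by simpa using hmin
    exact hnonpos.trans (by positivity)

end BoundaryTransfer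

section GradientImage

variable {E : Type*} [NormedAddCommGroup E] [InnerProductSpace ℝ E] [FiniteDimensional ℝ E]
  [MeasurableSpace E] [BorelSpace E] (μ : Measure E) [μ.IsAddHaarMeasure]

lemma addHaar_image_le_of_trace_le {s : Set E} {f : E → E} {f' : E → E →L[ℝ] E} {c : ℝ}
    (hs : MeasurableSet s) (hf : ∀ x ∈ s, HasFDerivWithinAt f (f' x) s x)
    (hpos : ∀ x ∈ s, (f' x).IsPositive) (hc : ∀ x ∈ s, trace ℝ E (f' x) ≤ c) :
    μ (f '' s) ≤ ENNReal.ofReal (c ^ finrank ℝ E) * μ s := by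
  have hdet : ∀ x ∈ s, ENNReal.ofReal |(f' x).det| ≤ ENNReal.ofReal (c ^ finrank ℝ E) := by
    intro x hx
    have hpos' := (hpos x hx).toLinearMap
    exact ENNReal.ofReal_le_ofReal <| (abs_det_le_trace_pow hpos').trans <|
      pow_le_pow_left₀ hpos'.trace_nonneg (hc x hx) _
  calc μ (f '' s) ≤ ∫⁻ x in s, ENNReal.ofReal |(f' x).det| ∂μ :=
        addHaar_image_le_lintegral_abs_det_fderiv μ hs hf
    _ ≤ ∫⁻ _ in s, ENNReal.ofReal (c ^ finrank ℝ E) ∂μ := setLIntegral_mono measurable_const hdet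
    _ = ENNReal.ofReal (c ^ finrank ℝ E) * μ s := setLIntegral_const ..

end GradientImage

lemma SmoothOnClosure.contDiffAt {n : ℕ} {Ω : Set (EuclideanSpace ℝ (Fin n))}
    {u : EuclideanSpace ℝ (Fin n) → ℝ} {x : EuclideanSpace ℝ (Fin n)} (hu : SmoothOnClosure n Ω u)
    (hx : x ∈ closure Ω) : ContDiffAt ℝ (⊤ : ℕ∞) u x := by
  obtain ⟨U, hU, hsub, hcont⟩ := hu
  exact hcont.contDiffAt (hU.mem_nhds (hsub hx))

namespace IsSol

variable {n : ℕ} {Ω Ω' : Set (EuclideanSpace ℝ (Fin n))} {u : EuclideanSpace ℝ (Fin n) → ℝ} {c : ℝ}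
  {x : EuclideanSpace ℝ (Fin n)}

lemma contDiffAt (hu : IsSol n Ω Ω' u c) (hx : x ∈ closure Ω) : ContDiffAt ℝ 3 u x :=
  (hu.1.contDiffAt hx).of_le ENat.LEInfty.out

lemma differentiableAt_gradient (hu : IsSol n Ω Ω' u c) (hx : x ∈ closure Ω) :
    DifferentiableAt ℝ (gradient u) x :=
  _root_.differentiableAt_gradient ((hu.contDiffAt hx).of_le (by norm_num))

lemma norm_gradient_lt_one (hu : IsSol n Ω Ω' u c) (hx : x ∈ closure Ω) : ‖gradient u x‖ < 1 :=
  hu.2.1 x hx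

lemma isPositive_fderiv_gradient (hu : IsSol n Ω Ω' u c) (hx : x ∈ closure Ω) :
    (fderiv ℝ (gradient u) x).IsPositive := by
  refine (ContinuousLinearMap.isPositive_iff _).2
    ⟨isSymmetric_fderiv_gradient ((hu.contDiffAt hx).of_le (by norm_num)), fun v ↦ ?_⟩
  rcases eq_or_ne v 0 with rfl | hv
  · simp
  · rw [real_inner_comm]
    exact (hu.2.2.1 x hx v hv).le

lemma bijOn_gradient (hu : IsSol n Ω Ω' u c) : BijOn (gradient u) Ω Ω' := hu.2.2.2.1

lemma gradient_mem_closure (hu : IsSol n Ω Ω' u c) (hx : x ∈ closure Ω) :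
    gradient u x ∈ closure Ω' :=
  (hu.differentiableAt_gradient hx).continuousAt.continuousWithinAt.mem_closure hx
    hu.bijOn_gradient.mapsTo

lemma lorentzSymbol_eq (hu : IsSol n Ω Ω' u c) (hx : x ∈ Ω) :
    lorentzSymbol (gradient u x) (fderiv ℝ (gradient u) x) =
      c * √(1 - ‖gradient u x‖ ^ 2) ^ 3 := by
  have hdiff := hu.differentiableAt_gradient (subset_closure hx)
  have hlt := hu.norm_gradient_lt_one (subset_closure hx)
  rw [← sqrt_pow_three_mul_trace_fderiv hdiff hlt, ← MOp_eq_trace_fderiv hdiff hlt,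
    hu.2.2.2.2 x hx, mul_comm]

lemma const_nonneg (hu : IsSol n Ω Ω' u c) (hx : x ∈ Ω) : 0 ≤ c := by
  have hlt := hu.norm_gradient_lt_one (subset_closure hx)
  have hpos := hu.isPositive_fderiv_gradient (subset_closure hx)
  exact nonneg_of_mul_nonneg_left (hpos.toLinearMap.trace_nonneg.trans <|
    trace_le_mul_sqrt hlt hpos (hu.lorentzSymbol_eq hx)) (Real.sqrt_pos.2 (one_sub_sq_norm_pos hlt))

lemma trace_le_const (hu : IsSol n Ω Ω' u c) (hx : x ∈ Ω) :
    trace ℝ _ (fderiv ℝ (gradient u) x).toLinearMap ≤ c := by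
  have hlt := hu.norm_gradient_lt_one (subset_closure hx)
  have hpos := hu.isPositive_fderiv_gradient (subset_closure hx)
  refine (trace_le_mul_sqrt hlt hpos (hu.lorentzSymbol_eq hx)).trans <|
    mul_le_of_le_one_right (hu.const_nonneg hx) (Real.sqrt_le_one.2 ?_)
  simp

lemma const_mul_le_trace {δ : ℝ} (hu : IsSol n Ω Ω' u c) (hx : x ∈ Ω) (hδ : 0 ≤ δ)
    (hδx : δ ≤ 1 - ‖gradient u x‖ ^ 2) :
    c * (√δ * δ) ≤ trace ℝ _ (fderiv ℝ (gradient u) x).toLinearMap := by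
  have hlt := hu.norm_gradient_lt_one (subset_closure hx)
  have hpos := hu.isPositive_fderiv_gradient (subset_closure hx)
  have hc := hu.const_nonneg hx
  calc c * (√δ * δ) ≤ c * (√(1 - ‖gradient u x‖ ^ 2) * (1 - ‖gradient u x‖ ^ 2)) := by gcongr
    _ = c * √(1 - ‖gradient u x‖ ^ 2) * (1 - ‖gradient u x‖ ^ 2) := by ring
    _ ≤ _ := (le_div_iff₀ (one_sub_sq_norm_pos hlt)).1 <|
        mul_sqrt_le_trace_div hlt hpos (hu.lorentzSymbol_eq hx)

lemma volume_le (hu : IsSol n Ω Ω' u c) (hΩ : IsOpen Ω) :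
    volume Ω' ≤ ENNReal.ofReal (c ^ n) * volume Ω := by
  have himage := addHaar_image_le_of_trace_le volume hΩ.measurableSet
    (fun x hx ↦ (hu.differentiableAt_gradient (subset_closure hx)).hasFDerivAt.hasFDerivWithinAt)
    (fun x hx ↦ hu.isPositive_fderiv_gradient (subset_closure hx)) fun x hx ↦ hu.trace_le_const hx
  rwa [hu.bijOn_gradient.image_eq, finrank_euclideanSpace_fin] at himage

end IsSol

lemma exists_pos_forall_isSol_le {n : ℕ} {Ω Ω' : Set (EuclideanSpace ℝ (Fin n))} (hn : n ≠ 0)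
    (hΩ : IsOpen Ω) (hΩb : Bornology.IsBounded Ω) (hΩ' : IsOpen Ω') (hΩ'b : Bornology.IsBounded Ω')
    (hΩ'ne : Ω'.Nonempty) :
    ∃ c₀ > 0, ∀ u c, IsSol n Ω Ω' u c → c₀ ≤ c := by
  have hvol' : 0 < volume.real Ω' :=
    ENNReal.toReal_pos (hΩ'.measure_pos volume hΩ'ne).ne' hΩ'b.measure_lt_top.ne
  refine ⟨min 1 (volume.real Ω' / (volume.real Ω + 1)), by positivity, fun u c hu ↦ ?_⟩
  rw [min_le_iff, or_iff_not_imp_left, not_le]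
  intro hc1
  obtain ⟨y, hy⟩ := hΩ'ne
  obtain ⟨x, hx, -⟩ := hu.bijOn_gradient.surjOn hy
  have hc := hu.const_nonneg hx
  have hvol : volume.real Ω' ≤ c ^ n * volume.real Ω := by
    simpa [Measure.real, ENNReal.toReal_mul, pow_nonneg hc n] using
      ENNReal.toReal_mono (ENNReal.mul_ne_top ENNReal.ofReal_ne_top hΩb.measure_lt_top.ne)
        (hu.volume_le hΩ)
  rw [div_le_iff₀ (by positivity)]
  calc volume.real Ω' ≤ c ^ n * volume.real Ω := hvol
    _ ≤ c * (volume.real Ω + 1) := by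
        gcongr
        exacts [pow_le_of_le_one hc hc1.le hn, le_add_of_nonneg_right zero_le_one]

section BarrierConstant

lemma exists_pos_forall_lt_mul_sq {a τ₀ : ℝ} (ha : 0 < a) (hτ₀ : 0 < τ₀) (A B : ℝ) :
    ∃ K > 0, ∀ τ ≥ τ₀, A * τ + B < K * a * τ ^ 2 := by
  refine ⟨(|A| / τ₀ + |B| / τ₀ ^ 2 + 1) / a, by positivity, fun τ hτ ↦ ?_⟩
  have hτpos : 0 < τ := hτ₀.trans_le hτ
  have hA : A * τ ≤ |A| / τ₀ * τ ^ 2 :=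
    calc A * τ ≤ |A| * τ := by gcongr; exact le_abs_self A
      _ = |A| / τ₀ * (τ₀ * τ) := by field_simp
      _ ≤ |A| / τ₀ * τ ^ 2 := by rw [sq]; gcongr
  have hB : B ≤ |B| / τ₀ ^ 2 * τ ^ 2 :=
    calc B ≤ |B| := le_abs_self B
      _ = |B| / τ₀ ^ 2 * τ₀ ^ 2 := by field_simp
      _ ≤ |B| / τ₀ ^ 2 * τ ^ 2 := by gcongr
  rw [div_mul_cancel₀ _ ha.ne']
  linarith [pow_pos hτpos 2]

lemma nonneg_of_forall_not_isLocalMin {X : Type*} [TopologicalSpace X] {s : Set X} {φ : X → ℝ}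
    (hs : IsOpen s) (hcomp : IsCompact (closure s)) (hφ : ContinuousOn φ (closure s))
    (hfrontier : ∀ x ∈ frontier s, 0 ≤ φ x) (hmin : ∀ x ∈ s, ¬IsLocalMin φ x) :
    ∀ x ∈ closure s, 0 ≤ φ x := by
  intro x hx
  obtain ⟨m, hm, hmmin⟩ := hcomp.exists_isMinOn ⟨x, hx⟩ hφ
  have hmfrontier : m ∈ frontier s := by
    rw [hs.frontier_eq]
    refine ⟨hm, fun hms ↦ hmin m hms (hmmin.isLocalMin ?_)⟩
    exact Filter.mem_of_superset (hs.mem_nhds hms) subset_closure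
  exact (hfrontier m hmfrontier).trans (hmmin hx)

variable {n : ℕ} {Ω Ω' : Set (EuclideanSpace ℝ (Fin n))} {g h : EuclideanSpace ℝ (Fin n) → ℝ}

lemma IsSol.le_mul_comp_gradient {u : EuclideanSpace ℝ (Fin n) → ℝ} {c K : ℝ}
    (hu : IsSol n Ω Ω' u c) (hΩb : Bornology.IsBounded Ω) (hg : Continuous g)
    (hΩ : Ω = {p | 0 < g p}) (hh : Continuous h) (hΩ' : Ω' = {p | 0 < h p}) (hK : 0 ≤ K)
    (hmin : ∀ x ∈ Ω, ¬IsLocalMin (fun y ↦ K * h (gradient u y) - g y) x) :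
    ∀ x ∈ Ω, g x ≤ K * h (gradient u x) := by
  have hΩopen : IsOpen Ω := hΩ ▸ isOpen_lt continuous_const hg
  have hh_nonneg : ∀ p ∈ closure Ω', 0 ≤ h p :=
    fun p hp ↦ closure_lt_subset_le continuous_const hh (hΩ' ▸ hp)
  refine fun x hx ↦ sub_nonneg.1 <| nonneg_of_forall_not_isLocalMin hΩopen
    hΩb.isCompact_closure (fun y hy ↦ ?_) (fun y hy ↦ ?_) hmin x (subset_closure hx)
  · exact ((hh.continuousAt.comp (hu.differentiableAt_gradient hy).continuousAt).const_mul K |>.sub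
      hg.continuousAt).continuousWithinAt
  · have hgy : g y ≤ 0 := by
      rw [hΩopen.frontier_eq, hΩ] at hy
      exact not_lt.1 hy.2
    exact sub_nonneg.2 <| hgy.trans <|
      mul_nonneg hK (hh_nonneg _ (hu.gradient_mem_closure (frontier_subset_closure hy)))

lemma IsSol.mul_sq_trace_le_of_isLocalMin_barrier {u : EuclideanSpace ℝ (Fin n) → ℝ}
    {c K θ δ B₁ B₂ : ℝ} {x : EuclideanSpace ℝ (Fin n)} (hu : IsSol n Ω Ω' u c) (hΩ : IsOpen Ω)
    (hg : ContDiff ℝ 2 g) (hh : ContDiff ℝ 2 h) (hK : 0 ≤ K) (hθ : 0 ≤ θ)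
    (hconc : ∀ p ξ, ⟪ξ, fderiv ℝ (gradient h) p ξ⟫ ≤ -θ * ‖ξ‖ ^ 2) (hx : x ∈ Ω) (hδ : 0 < δ)
    (hδx : δ ≤ 1 - ‖gradient u x‖ ^ 2) (hB₁ : ‖gradient g x‖ ≤ B₁)
    (hB₂ : ‖fderiv ℝ (gradient g) x‖ ≤ B₂)
    (hmin : IsLocalMin (fun y ↦ K * h (gradient u y) - g y) x) :
    K * (θ * δ) * trace ℝ _ (fderiv ℝ (gradient u) x).toLinearMap ^ 2 ≤
      n * ((2 + 3 / δ) * B₁) * trace ℝ _ (fderiv ℝ (gradient u) x).toLinearMap +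
        n * ((n + 1) * B₂) := by
  have hxcl := subset_closure hx
  have hpos := hu.isPositive_fderiv_gradient hxcl
  have heq := Filter.eventually_of_mem (hΩ.mem_nhds hx) fun y hy ↦ hu.lorentzSymbol_eq hy
  have hbound := _root_.mul_sq_trace_le_of_isLocalMin_barrier (hu.contDiffAt hxcl) hh.contDiffAt
    hg.contDiffAt (hu.norm_gradient_lt_one hxcl) hpos heq hK hθ (hconc _) hmin
  rw [finrank_euclideanSpace_fin] at hbound
  set τ := trace ℝ _ (fderiv ℝ (gradient u) x).toLinearMap
  have hτ : 0 ≤ τ := hpos.toLinearMap.trace_nonneg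
  have hB₁₀ : 0 ≤ B₁ := (norm_nonneg _).trans hB₁
  calc K * (θ * δ) * τ ^ 2 = K * θ * δ * τ ^ 2 := by ring
    _ ≤ K * θ * (1 - ‖gradient u x‖ ^ 2) * τ ^ 2 := by gcongr
    _ ≤ n * ((2 + 3 / δ) * B₁ * τ + (n + 1) * B₂) := hbound.trans (by gcongr)
    _ = n * ((2 + 3 / δ) * B₁) * τ + n * ((n + 1) * B₂) := by ring

lemma exists_pos_forall_isSol_le_mul_comp_gradient {θ : ℝ} (hn : n ≠ 0)
    (hΩb : Bornology.IsBounded Ω) (hg : ContDiff ℝ 2 g) (hΩ : Ω = {p | 0 < g p})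
    (hΩ' : IsUnifConvexDefFn n Ω' h θ) (hΩ'ne : Ω'.Nonempty)
    (hsub : closure Ω' ⊆ Metric.ball (0 : EuclideanSpace ℝ (Fin n)) 1) :
    ∃ K > 0, ∀ u c, IsSol n Ω Ω' u c → ∀ x ∈ Ω, g x ≤ K * h (gradient u x) := by
  obtain ⟨hh, hΩ'h, -, hθ, hconc⟩ := hΩ'
  have hh2 : ContDiff ℝ 2 h := hh.of_le ENat.LEInfty.out
  have hΩopen : IsOpen Ω := hΩ ▸ isOpen_lt continuous_const hg.continuous
  have hΩ'open : IsOpen Ω' := hΩ'h ▸ isOpen_lt continuous_const hh.continuous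
  have hΩ'b : Bornology.IsBounded Ω' := Metric.isBounded_ball.subset (subset_closure.trans hsub)
  obtain ⟨c₀, hc₀, hc₀_le⟩ := exists_pos_forall_isSol_le hn hΩopen hΩb hΩ'open hΩ'b hΩ'ne
  obtain ⟨δ, hδ, hδ_le⟩ : ∃ δ > 0, ∀ p ∈ closure Ω', δ ≤ 1 - ‖p‖ ^ 2 :=
    hΩ'b.isCompact_closure.exists_forall_le' (by fun_prop)
      fun p hp ↦ one_sub_sq_norm_pos (mem_ball_zero_iff.1 (hsub hp))
  have hgrad : ContDiff ℝ 1 (gradient g) :=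
    contDiff_iff_contDiffAt.2 fun x ↦ contDiffAt_gradient hg.contDiffAt (by norm_num)
  obtain ⟨B₁, hB₁⟩ := hΩb.isCompact_closure.exists_bound_of_continuousOn
    hgrad.continuous.continuousOn
  obtain ⟨B₂, hB₂⟩ := hΩb.isCompact_closure.exists_bound_of_continuousOn
    (hgrad.continuous_fderiv one_ne_zero).continuousOn
  obtain ⟨K, hK, hKτ⟩ := exists_pos_forall_lt_mul_sq (mul_pos hθ hδ)
    (τ₀ := c₀ * (√δ * δ)) (by positivity) (n * ((2 + 3 / δ) * B₁)) (n * ((n + 1) * B₂))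
  refine ⟨K, hK, fun u c hu ↦ hu.le_mul_comp_gradient hΩb hg.continuous hΩ hh.continuous hΩ'h
    hK.le fun x hx hmin ↦ ?_⟩
  have hxcl := subset_closure hx
  have hδx := hδ_le _ (hu.gradient_mem_closure hxcl)
  have hτ := (mul_le_mul_of_nonneg_right (hc₀_le u c hu) (by positivity)).trans
    (hu.const_mul_le_trace hx hδ.le hδx)
  exact (hKτ _ hτ).not_ge <| hu.mul_sq_trace_le_of_isLocalMin_barrier hΩopen hg hh2 hK.le hθ.le
    hconc hx hδ hδx (hB₁ x hxcl) (hB₂ x hxcl) hmin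

end BarrierConstant

namespace IsLegendre

variable {n : ℕ} {Ω Ω' : Set (EuclideanSpace ℝ (Fin n))} {u ut : EuclideanSpace ℝ (Fin n) → ℝ}
  {y : EuclideanSpace ℝ (Fin n)}

lemma exists_gradient_eq {c : ℝ} (hut : IsLegendre n Ω Ω' u ut) (hu : IsSol n Ω Ω' u c)
    (hy : y ∈ Ω') : ∃ x ∈ Ω, gradient u x = y ∧ gradient ut y = x := by
  obtain ⟨x, hx, rfl⟩ := hu.bijOn_gradient.surjOn hy
  exact ⟨x, hx, rfl, hut.2.2 x hx⟩

lemma differentiableAt_gradient (hut : IsLegendre n Ω Ω' u ut) (hy : y ∈ closure Ω') :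
    DifferentiableAt ℝ (gradient ut) y :=
  _root_.differentiableAt_gradient ((hut.1.contDiffAt hy).of_le ENat.LEInfty.out)

lemma gradient_mem_closure {c : ℝ} (hut : IsLegendre n Ω Ω' u ut) (hu : IsSol n Ω Ω' u c)
    (hy : y ∈ closure Ω') : gradient ut y ∈ closure Ω :=
  (hut.differentiableAt_gradient hy).continuousAt.continuousWithinAt.mem_closure hy fun z hz ↦ by
    obtain ⟨x, hx, -, hzx⟩ := hut.exists_gradient_eq hu hz
    rwa [hzx]

lemma inner_gradient_fderiv_gradient_le {g h : EuclideanSpace ℝ (Fin n) → ℝ} {c K θ : ℝ}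
    (hut : IsLegendre n Ω Ω' u ut) (hu : IsSol n Ω Ω' u c) (hg : Differentiable ℝ g)
    (hΩ : Ω = {p | 0 < g p}) (hΩ' : IsUnifConvexDefFn n Ω' h θ) (hK : 0 ≤ K)
    (hle : ∀ x ∈ Ω, g x ≤ K * h (gradient u x)) (hy : y ∈ frontier Ω')
    (v : EuclideanSpace ℝ (Fin n)) :
    ⟪gradient g (gradient ut y), fderiv ℝ (gradient ut) y v⟫ ≤ K * ‖v‖ := by
  obtain ⟨hh, hΩ'h, hnorm, -, -⟩ := hΩ'
  have hycl : y ∈ closure Ω' := frontier_subset_closure hy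
  have hy₀ : h y = 0 :=
    (frontier_lt_subset_eq continuous_const hh.continuous (hΩ'h ▸ hy : y ∈ frontier _)).symm
  have hnonneg (z) (hz : 0 < h z) : 0 ≤ g (gradient ut z) := by
    obtain ⟨x, hx, -, hzx⟩ := hut.exists_gradient_eq hu (hΩ'h ▸ hz : z ∈ Ω')
    rw [hzx]
    exact (hΩ ▸ hx : x ∈ {p | 0 < g p}).le
  have hgT_le (z) (hz : 0 < h z) : g (gradient ut z) ≤ K * h z := by
    obtain ⟨x, hx, hxz, hzx⟩ := hut.exists_gradient_eq hu (hΩ'h ▸ hz : z ∈ Ω')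
    rw [hzx, ← hxz]
    exact hle x hx
  have hbound := inner_gradient_fderiv_le (hut.differentiableAt_gradient hycl)
    (hh.differentiable (by simp) y) (hg _) (hΩ'h ▸ hycl) hy₀
    (norm_ne_zero_iff.1 ((hnorm y hy).trans_ne one_ne_zero)) hK hnonneg hgT_le v
  rwa [hnorm y hy, mul_one] at hbound

end IsLegendre

theorem statement13_general {n : ℕ} {Ω Ω' : Set (EuclideanSpace ℝ (Fin n))}
    {g h : EuclideanSpace ℝ (Fin n) → ℝ} {θ : ℝ} (hΩb : Bornology.IsBounded Ω)
    (hg : ContDiff ℝ 2 g) (hΩ : Ω = {p | 0 < g p}) (hΩ' : IsUnifConvexDefFn n Ω' h θ)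
    (hsub : closure Ω' ⊆ Metric.ball (0 : EuclideanSpace ℝ (Fin n)) 1) :
    ∃ C : ℝ, 0 < C ∧
      ∀ (u ut : EuclideanSpace ℝ (Fin n) → ℝ) (c : ℝ),
        IsSol n Ω Ω' u c → IsLegendre n Ω Ω' u ut →
        ∀ y ∈ frontier Ω',
          ⟪gradient g (gradient ut y),
            fderiv ℝ (gradient ut) y (gradient g (gradient ut y))⟫ ≤ C := by
  rcases (frontier Ω').eq_empty_or_nonempty with hempty | ⟨y₀, hy₀⟩
  · exact ⟨1, one_pos, by simp [hempty]⟩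
  have hn : n ≠ 0 := by
    rintro rfl
    simpa [Subsingleton.elim (gradient h y₀) 0] using hΩ'.2.2.1 y₀ hy₀
  have hne : Ω'.Nonempty := closure_nonempty_iff.1 ⟨y₀, frontier_subset_closure hy₀⟩
  obtain ⟨K, hK, hle⟩ :=
    exists_pos_forall_isSol_le_mul_comp_gradient hn hΩb hg hΩ hΩ' hne hsub
  obtain ⟨B, hB, hgrad⟩ : ∃ B > 0, ∀ x ∈ closure Ω, ‖gradient g x‖ ≤ B := by
    have hcont : Continuous (gradient g) :=
      (toDual ℝ _).symm.continuous.comp (hg.continuous_fderiv two_ne_zero)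
    obtain ⟨B, hB⟩ := (hΩb.isCompact_closure.image hcont).isBounded.exists_pos_norm_le
    exact ⟨B, hB.1, forall_mem_image.1 hB.2⟩
  refine ⟨K * B, mul_pos hK hB, fun u ut c hu hut y hy ↦ ?_⟩
  exact (hut.inner_gradient_fderiv_gradient_le hu (hg.differentiable two_ne_zero) hΩ hΩ' hK.le
    (hle u c hu) hy _).trans <| by
      gcongr
      exact hgrad _ (hut.gradient_mem_closure hu (frontier_subset_closure hy))

/-- Lemma 4.4.  Boundary bound `⟨β̃, D²ũ β̃⟩ ≤ C₂₈` on `∂Ω̃`, where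
`β̃(y) = ∇h̃(∇ũ(y))` and `h̃` is the defining function of `Ω`. -/
theorem statement13 (n : ℕ) (hn : 2 ≤ n) (Ω Ω' : Set (EuclideanSpace ℝ (Fin n)))
    (g h : EuclideanSpace ℝ (Fin n) → ℝ) (θ₁ θ₂ : ℝ)
    (hΩb : Bornology.IsBounded Ω) (hΩ'b : Bornology.IsBounded Ω')
    (hΩ : IsUnifConvexDefFn n Ω g θ₁) (hΩ' : IsUnifConvexDefFn n Ω' h θ₂)
    (hsub : closure Ω' ⊆ Metric.ball (0 : EuclideanSpace ℝ (Fin n)) 1) :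
    ∃ C₂₈ : ℝ, 0 < C₂₈ ∧
      ∀ (u ut : EuclideanSpace ℝ (Fin n) → ℝ) (c : ℝ),
        IsSol n Ω Ω' u c → IsLegendre n Ω Ω' u ut →
        ∀ y ∈ frontier Ω',
          ⟪gradient g (gradient ut y),
            fderiv ℝ (gradient ut) y (gradient g (gradient ut y))⟫ ≤ C₂₈ := by
  exact statement13_general hΩb (hΩ.1.of_le ENat.LEInfty.out) hΩ.2.1 hΩ' hsub
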